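/- Let a, b > 0 and let T : ℝ^m → ℝ^m be given by T(x) = [1 + a exp(−‖x‖²/b)]⁻¹ x. Then T is differentiable at every x ∈ ℝ^m with derivative D_xT = [1 + a exp(−‖x‖²/b)]⁻¹ · (I_m + 2ab⁻¹ exp(−‖x‖²/b)[1 + a exp(−‖x‖²/b)]⁻¹ xx'), and the determinant of D_xT equals [1 + a exp(−‖x‖²/b)]^{−m} · (1 + 2b⁻¹[1 + a⁻¹ exp(‖x‖²/b)]⁻¹ ‖x‖²), which is always positive. -/

import Mathlib

open MeasureTheory Matrix Real Filter Topology ENNReal NNReal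

noncomputable section

/-- Euclidean norm of a finite tuple. -/
def enorm2 {ι : Type*} [Fintype ι] (v : ι → ℝ) : ℝ := Real.sqrt (∑ i, v i ^ 2)

/-- The `N(0, σ² I)` distribution on `ι → ℝ`, given by its Lebesgue density. -/
def gaussPi (ι : Type*) [Fintype ι] (σ2 : ℝ) : Measure (ι → ℝ) :=
  volume.withDensity fun x => ENNReal.ofReal
    ((2 * π * σ2) ^ (-(Fintype.card ι : ℝ) / 2) * Real.exp (-(enorm2 x) ^ 2 / (2 * σ2)))

/-- The Lebesgue density of the `N(0, σ² Q⁻¹)` distribution on `ι → ℝ`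
(for `Q` symmetric positive definite). -/
def gaussCovDens {ι : Type*} [Fintype ι] [DecidableEq ι] (σ2 : ℝ) (Q : Matrix ι ι ℝ)
    (x : ι → ℝ) : ℝ :=
  (2 * π * σ2) ^ (-(Fintype.card ι : ℝ) / 2) * Real.sqrt Q.det *
    Real.exp (-(x ⬝ᵥ Q.mulVec x) / (2 * σ2))

/-- The `N(0, σ² Q⁻¹)` distribution on `ι → ℝ` (for `Q` symmetric positive definite),
given by its Lebesgue density. -/
def gaussCov {ι : Type*} [Fintype ι] [DecidableEq ι] (σ2 : ℝ) (Q : Matrix ι ι ℝ) :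
    Measure (ι → ℝ) :=
  volume.withDensity fun x => ENNReal.ofReal (gaussCovDens σ2 Q x)

/-- The positive semidefinite square root of a positive semidefinite matrix
(Mathlib's former `Matrix.PosSemidef.sqrt`, for real matrices). -/
def Matrix.PosSemidef.sqrt {ι : Type*} [Fintype ι] [DecidableEq ι] {A : Matrix ι ι ℝ}
    (hA : A.PosSemidef) : Matrix ι ι ℝ :=
  hA.isHermitian.eigenvectorUnitary.1 * diagonal (Real.sqrt ∘ hA.isHermitian.eigenvalues) *
    (star hA.isHermitian.eigenvectorUnitary : Matrix ι ι ℝ)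

open Classical in
/-- Symmetric positive semidefinite square root (junk value `0` off the psd cone). -/
def msqrt {ι : Type*} [Fintype ι] [DecidableEq ι] (A : Matrix ι ι ℝ) : Matrix ι ι ℝ :=
  if h : A.PosSemidef then h.sqrt else 0

open Classical in
/-- Smallest eigenvalue of a symmetric matrix (junk value `0` otherwise). -/
def lamMin {ι : Type*} [Fintype ι] [DecidableEq ι] (A : Matrix ι ι ℝ) : ℝ :=
  if h : A.IsHermitian then ⨅ i, h.eigenvalues i else 0

open Classical in
/-- Largest eigenvalue of a symmetric matrix (junk value `0` otherwise). -/
def lamMax {ι : Type*} [Fintype ι] [DecidableEq ι] (A : Matrix ι ι ℝ) : ℝ :=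
  if h : A.IsHermitian then ⨆ i, h.eigenvalues i else 0

variable {n k₁ k₂ : ℕ}

/-- First block of columns of the design matrix. -/
def X1 (X : Matrix (Fin n) (Fin k₁ ⊕ Fin k₂) ℝ) : Matrix (Fin n) (Fin k₁) ℝ :=
  X.submatrix id Sum.inl

/-- Second block of columns of the design matrix. -/
def X2 (X : Matrix (Fin n) (Fin k₁ ⊕ Fin k₂) ℝ) : Matrix (Fin n) (Fin k₂) ℝ :=
  X.submatrix id Sum.inr

/-- Unrestricted least squares estimator. -/
def betaU (X : Matrix (Fin n) (Fin k₁ ⊕ Fin k₂) ℝ) (Y : Fin n → ℝ) : (Fin k₁ ⊕ Fin k₂) → ℝ :=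
  (Xᵀ * X)⁻¹.mulVec (Xᵀ.mulVec Y)

/-- Restricted least squares estimator. -/
def betaR (X : Matrix (Fin n) (Fin k₁ ⊕ Fin k₂) ℝ) (Y : Fin n → ℝ) : (Fin k₁ ⊕ Fin k₂) → ℝ :=
  Sum.elim (((X1 X)ᵀ * X1 X)⁻¹.mulVec ((X1 X)ᵀ.mulVec Y)) (fun _ => 0)

/-- Risk estimate of the restricted model. -/
def rR (X : Matrix (Fin n) (Fin k₁ ⊕ Fin k₂) ℝ) (σ2 : ℝ) (Y : Fin n → ℝ) : ℝ :=
  Y ⬝ᵥ Y - betaR X Y ⬝ᵥ (Xᵀ * X).mulVec (betaR X Y) + σ2 * (2 * k₁ - n)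

/-- Risk estimate of the unrestricted model. -/
def rU (X : Matrix (Fin n) (Fin k₁ ⊕ Fin k₂) ℝ) (σ2 : ℝ) (Y : Fin n → ℝ) : ℝ :=
  Y ⬝ᵥ Y - betaU X Y ⬝ᵥ (Xᵀ * X).mulVec (betaU X Y) + σ2 * (2 * (k₁ + k₂) - n)

/-- The model averaging weight `λ̂`. -/
def lamHat (α σ2 : ℝ) (X : Matrix (Fin n) (Fin k₁ ⊕ Fin k₂) ℝ) (Y : Fin n → ℝ) : ℝ :=
  Real.exp (-(α * rR X σ2 Y) / σ2) /
    (Real.exp (-(α * rR X σ2 Y) / σ2) + Real.exp (-(α * rU X σ2 Y) / σ2))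

/-- Leung and Barron's model averaging estimator `β̃`. -/
def mavg (α σ2 : ℝ) (X : Matrix (Fin n) (Fin k₁ ⊕ Fin k₂) ℝ) (Y : Fin n → ℝ) :
    (Fin k₁ ⊕ Fin k₂) → ℝ :=
  lamHat α σ2 X Y • betaR X Y + (1 - lamHat α σ2 X Y) • betaU X Y

/-- Projection on the column space of `X₁`. -/
def projR (X : Matrix (Fin n) (Fin k₁ ⊕ Fin k₂) ℝ) : Matrix (Fin n) (Fin n) ℝ :=
  X1 X * ((X1 X)ᵀ * X1 X)⁻¹ * (X1 X)ᵀ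

/-- Projection on the column space of `X`. -/
def projU (X : Matrix (Fin n) (Fin k₁ ⊕ Fin k₂) ℝ) : Matrix (Fin n) (Fin n) ℝ :=
  X * (Xᵀ * X)⁻¹ * Xᵀ

/-- The distribution `P_{n,β,σ}` of `Y = Xβ + u`, `u ~ N(0, σ² Iₙ)`. -/
def Pmeas (X : Matrix (Fin n) (Fin k₁ ⊕ Fin k₂) ℝ) (β : (Fin k₁ ⊕ Fin k₂) → ℝ) (σ2 : ℝ) :
    Measure (Fin n → ℝ) :=
  (gaussPi (Fin n) σ2).map (fun u => X.mulVec β + u)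

/-- The function `h_{a,b}(ξ) = ξ / (1 + a exp(−ξ²/b))`. -/
def hfun (a b ξ : ℝ) : ℝ := ξ / (1 + a * Real.exp (-ξ ^ 2 / b))

/-- The inverse `g_{a,b}` of `h_{a,b}`. -/
def gfun (a b : ℝ) : ℝ → ℝ := Function.invFun (hfun a b)

open Classical in
/-- `g(‖w‖) w / ‖w‖`, with the convention that this is `0` for `w = 0`. -/
def gdir (a b : ℝ) {ι : Type*} [Fintype ι] (w : ι → ℝ) : ι → ℝ :=
  if w = 0 then 0 else (gfun a b (enorm2 w) / enorm2 w) • w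


/-- The finite-sample density `f_{n,β,σ}` of `√n(β̃ − β)` (Theorem 3 of the paper). -/
def fdens {n k₁ k₂ : ℕ} (X : Matrix (Fin n) (Fin k₁ ⊕ Fin k₂) ℝ)
    (β : (Fin k₁ ⊕ Fin k₂) → ℝ) (σ2 α : ℝ) (t : (Fin k₁ ⊕ Fin k₂) → ℝ) : ℝ :=
  let a := Real.exp (2 * α * k₂)
  let b := σ2 / α
  let S := (X2 X)ᵀ * (1 - projR X) * X2 X
  let w := (Real.sqrt n)⁻¹ • (msqrt S).mulVec ((t ∘ Sum.inr) + Real.sqrt n • (β ∘ Sum.inr))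
  (2 * π * σ2) ^ (-((k₁ : ℝ) + k₂) / 2) * Real.sqrt (((n : ℝ)⁻¹ • (Xᵀ * X)).det) *
    Real.exp (-(enorm2 ((Real.sqrt n)⁻¹ •
        ((msqrt ((X1 X)ᵀ * X1 X)).mulVec (t ∘ Sum.inl) +
          ((msqrt ((X1 X)ᵀ * X1 X))⁻¹ * (X1 X)ᵀ * X2 X).mulVec (t ∘ Sum.inr)))) ^ 2 /
      (2 * σ2)) *
    (1 + Real.exp (-(α / σ2) * gfun a b (enorm2 w) ^ 2 + 2 * α * k₂)) ^ (k₂ : ℕ) *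
    (1 + (2 * α / σ2) * gfun a b (enorm2 w) ^ 2 *
        (1 + Real.exp ((α / σ2) * gfun a b (enorm2 w) ^ 2 - 2 * α * k₂))⁻¹)⁻¹ *
    Real.exp (-(enorm2 (gdir a b w - (msqrt S).mulVec (β ∘ Sum.inr))) ^ 2 / (2 * σ2))

/-- The density `f_{∞,γ}` of the limiting distribution (formula (13) of the paper),
stated for a general symmetric positive definite matrix in place of `Q`. -/
def fInfty {k₁ k₂ : ℕ} (Q : Matrix (Fin k₁ ⊕ Fin k₂) (Fin k₁ ⊕ Fin k₂) ℝ) (σ2 α : ℝ)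
    (γ : Fin k₂ → ℝ) (t : (Fin k₁ ⊕ Fin k₂) → ℝ) : ℝ :=
  let a := Real.exp (2 * α * k₂)
  let b := σ2 / α
  let S := Q.toBlocks₂₂ - Q.toBlocks₂₁ * Q.toBlocks₁₁⁻¹ * Q.toBlocks₁₂
  let w := (msqrt S).mulVec ((t ∘ Sum.inr) + γ)
  (2 * π * σ2) ^ (-((k₁ : ℝ) + k₂) / 2) * Real.sqrt Q.det *
    Real.exp (-(enorm2 ((msqrt Q.toBlocks₁₁).mulVec (t ∘ Sum.inl) +
        ((msqrt Q.toBlocks₁₁)⁻¹ * Q.toBlocks₁₂).mulVec (t ∘ Sum.inr))) ^ 2 / (2 * σ2)) *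
    (1 + Real.exp (-(α / σ2) * gfun a b (enorm2 w) ^ 2 + 2 * α * k₂)) ^ (k₂ : ℕ) *
    (1 + (2 * α / σ2) * gfun a b (enorm2 w) ^ 2 *
        (1 + Real.exp ((α / σ2) * gfun a b (enorm2 w) ^ 2 - 2 * α * k₂))⁻¹)⁻¹ *
    Real.exp (-(enorm2 (gdir a b w - (msqrt S).mulVec γ)) ^ 2 / (2 * σ2))


/-- The limiting law (12): the distribution of
`B_∞γ + C_∞Z₁ + [1 + exp(2αk₂) exp(−α‖Z₂ + (Q₂₂ − Q₂₁Q₁₁⁻¹Q₁₂)^{1/2}γ‖²/σ²)]⁻¹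
  · (D_∞Z₂ − B_∞γ)` with `Z₁ ~ N(0, σ²I_{k₁})`, `Z₂ ~ N(0, σ²I_{k₂})` independent. -/
def limitLaw {k₁ k₂ : ℕ} (Q : Matrix (Fin k₁ ⊕ Fin k₂) (Fin k₁ ⊕ Fin k₂) ℝ) (σ2 α : ℝ)
    (γ : Fin k₂ → ℝ) : Measure ((Fin k₁ ⊕ Fin k₂) → ℝ) :=
  ((gaussPi (Fin k₁) σ2).prod (gaussPi (Fin k₂) σ2)).map
    (fun Z : (Fin k₁ → ℝ) × (Fin k₂ → ℝ) =>
      (fromRows (Q.toBlocks₁₁⁻¹ * Q.toBlocks₁₂) (-1)).mulVec γ +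
      (fromRows (msqrt Q.toBlocks₁₁)⁻¹ 0).mulVec Z.1 +
      (1 + Real.exp (2 * α * k₂) *
          Real.exp (-α * (enorm2 (Z.2 +
            (msqrt (Q.toBlocks₂₂ - Q.toBlocks₂₁ * Q.toBlocks₁₁⁻¹ * Q.toBlocks₁₂)).mulVec
              γ)) ^ 2 / σ2))⁻¹ •
        ((fromRows
            (-(Q.toBlocks₁₁⁻¹ * Q.toBlocks₁₂ *
              (msqrt (Q.toBlocks₂₂ - Q.toBlocks₂₁ * Q.toBlocks₁₁⁻¹ * Q.toBlocks₁₂))⁻¹))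
            ((msqrt (Q.toBlocks₂₂ - Q.toBlocks₂₁ * Q.toBlocks₁₁⁻¹ * Q.toBlocks₁₂))⁻¹)).mulVec
            Z.2 -
          (fromRows (Q.toBlocks₁₁⁻¹ * Q.toBlocks₁₂) (-1)).mulVec γ))


/-- The squared Euclidean norm is the sum of squares. -/
theorem enorm2_sq_eq {ι : Type*} [Fintype ι] (v : ι → ℝ) : enorm2 v ^ 2 = ∑ i, v i ^ 2 :=
  Real.sq_sqrt (Finset.sum_nonneg fun _ _ => sq_nonneg _)

/-- Determinant of a rank-one perturbation of the identity. -/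
theorem det_one_add_smul_vecMulVec_self {m : ℕ} (c : ℝ) (x : Fin m → ℝ) :
    ((1 : Matrix (Fin m) (Fin m) ℝ) + c • vecMulVec x x).det = 1 + c * ∑ i, x i ^ 2 := by
  have h := Matrix.det_one_add_replicateCol_mul_replicateRow (ι := Unit) (c • x) x
  have e : replicateCol Unit (c • x) * replicateRow Unit x = c • vecMulVec x x := by
    ext i j
    simp [Matrix.mul_apply, vecMulVec_apply, mul_assoc]
  rw [e] at h
  rw [h, dotProduct_smul, smul_eq_mul]
  simp [dotProduct, sq]

/-- Derivative of the squared norm. -/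
theorem hasFDerivAt_sum_sq {m : ℕ} (x : Fin m → ℝ) :
    HasFDerivAt (fun y : Fin m → ℝ => ∑ i, y i ^ 2)
      (∑ i, (2 * x i) • ContinuousLinearMap.proj (R := ℝ) (φ := fun _ : Fin m => ℝ) i) x := by
  refine HasFDerivAt.fun_sum fun i _ => ?_
  have h := (hasFDerivAt_apply (𝕜 := ℝ) (F' := fun _ : Fin m => ℝ) i x).pow 2
  simpa using h

/-- `T(x) = [1 + a exp(−‖x‖²/b)]⁻¹ x` is differentiable with derivative
matrix `[1 + a e^{−‖x‖²/b}]⁻¹ (I_m + 2ab⁻¹ e^{−‖x‖²/b}[1 + a e^{−‖x‖²/b}]⁻¹ xx')`, whose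
determinant is `[1 + a e^{−‖x‖²/b}]^{−m} (1 + 2b⁻¹[1 + a⁻¹e^{‖x‖²/b}]⁻¹‖x‖²) > 0`. -/
theorem statement17 (a b : ℝ) (ha : 0 < a) (hb : 0 < b) (m : ℕ) (hm : 0 < m)
    (x : Fin m → ℝ) :
    HasFDerivAt (fun x : Fin m → ℝ => (1 + a * Real.exp (-(enorm2 x) ^ 2 / b))⁻¹ • x)
      (LinearMap.toContinuousLinearMap (Matrix.toLin'
        ((1 + a * Real.exp (-(enorm2 x) ^ 2 / b))⁻¹ •
          ((1 : Matrix (Fin m) (Fin m) ℝ) +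
            (2 * a * b⁻¹ * Real.exp (-(enorm2 x) ^ 2 / b) *
              (1 + a * Real.exp (-(enorm2 x) ^ 2 / b))⁻¹) • vecMulVec x x)))) x ∧
    ((1 + a * Real.exp (-(enorm2 x) ^ 2 / b))⁻¹ •
        ((1 : Matrix (Fin m) (Fin m) ℝ) +
          (2 * a * b⁻¹ * Real.exp (-(enorm2 x) ^ 2 / b) *
            (1 + a * Real.exp (-(enorm2 x) ^ 2 / b))⁻¹) • vecMulVec x x)).det =
      ((1 + a * Real.exp (-(enorm2 x) ^ 2 / b)) ^ m)⁻¹ *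
        (1 + 2 * b⁻¹ * (1 + a⁻¹ * Real.exp ((enorm2 x) ^ 2 / b))⁻¹ * (enorm2 x) ^ 2) ∧
    0 < ((1 + a * Real.exp (-(enorm2 x) ^ 2 / b)) ^ m)⁻¹ *
        (1 + 2 * b⁻¹ * (1 + a⁻¹ * Real.exp ((enorm2 x) ^ 2 / b))⁻¹ * (enorm2 x) ^ 2) := by
  simp only [enorm2_sq_eq]
  have hE : 0 < Real.exp (-(∑ i, x i ^ 2) / b) := Real.exp_pos _
  have hpos : 0 < 1 + a * Real.exp (-(∑ i, x i ^ 2) / b) := by positivity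
  have hS : 0 ≤ ∑ i, x i ^ 2 := Finset.sum_nonneg fun _ _ => sq_nonneg _
  refine ⟨?_, ?_, ?_⟩
  · have h1 := ((((hasFDerivAt_sum_sq x).neg.mul_const b⁻¹).exp.const_mul a).const_add 1)
    have h2 := (hasDerivAt_inv hpos.ne').comp_hasFDerivAt x h1
    have h3 := h2.smul (hasFDerivAt_id x)
    refine HasFDerivAt.congr_fderiv h3 ?_
    refine ContinuousLinearMap.ext fun v => funext fun j => ?_
    have hv : (∑ i, (2 * x i) • ContinuousLinearMap.proj (R := ℝ) (φ := fun _ : Fin m => ℝ) i) v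
        = 2 * (x ⬝ᵥ v) := by
      simp [dotProduct, Finset.mul_sum, mul_assoc]
    have hm1 : (vecMulVec x x).mulVec v j = x j * (x ⬝ᵥ v) := by
      simp [mulVec, dotProduct, vecMulVec_apply, Finset.mul_sum, mul_assoc]
    simp only [LinearMap.coe_toContinuousLinearMap', toLin'_apply, smul_mulVec, add_mulVec,
      one_mulVec, Pi.smul_apply, Pi.add_apply, hm1, smul_eq_mul, Function.comp_apply,
      _root_.add_apply, _root_.smul_apply,
      ContinuousLinearMap.smulRight_apply, _root_.neg_apply, hv, id,
      ContinuousLinearMap.id_apply, ← div_eq_mul_inv]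
    generalize Real.exp (-(∑ i, x i ^ 2) / b) = E at *
    field_simp
  · rw [det_smul, det_one_add_smul_vecMulVec_self, Fintype.card_fin, inv_pow]
    congr 1
    have : Real.exp ((∑ i, x i ^ 2) / b) = (Real.exp (-(∑ i, x i ^ 2) / b))⁻¹ := by
      rw [← Real.exp_neg, neg_div, neg_neg]
    rw [this]
    generalize Real.exp (-(∑ i, x i ^ 2) / b) = E at *
    field_simp
    ring
  · positivity

end
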